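/- Let H be a real Hilbert space, let 0 < c₁, c₂ < ∞ with c₁ ≠ c₂, let s ∈ {−1,1}, let J be a unitary operator on H, and let n ∈ H be a unit vector. Then for every w ∈ M(H) and every ε ∈ (0, min(c₁,c₂)) there exist λ ∈ (0,ε) and a ∈ M(H) such that W_{λ,c₁}[s,n,J;a] w ≠ W_{λ,c₂}[s,n,J;a] w. -/

import Mathlib

open scoped InnerProductSpace

/-- Generalized Lorentz transform `W_{λ,c}[s,n,J]` on `M(H) = ℝ × H` (case `λ < ∞`, `c < ∞`). -/
noncomputable def Wfin {H : Type*} [NormedAddCommGroup H] [InnerProductSpace ℝ H]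
    (lam c s : ℝ) (n : H) (J : H ≃ₗᵢ[ℝ] H) (w : ℝ × H) : ℝ × H :=
  ((s * w.1 - lam / c ^ 2 * ⟪n, w.2⟫_ℝ) / Real.sqrt |1 - lam ^ 2 / c ^ 2|,
    J (((lam * w.1 - s * ⟪n, w.2⟫_ℝ) / Real.sqrt |1 - lam ^ 2 / c ^ 2|) • n
      + (w.2 - ⟪n, w.2⟫_ℝ • n)))

/-- Generalized Lorentz transform `W_{λ,∞}[s,n,J]` on `M(H) = ℝ × H` (case `c = ∞`). -/
noncomputable def Wgal {H : Type*} [NormedAddCommGroup H] [InnerProductSpace ℝ H]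
    (lam s : ℝ) (n : H) (J : H ≃ₗᵢ[ℝ] H) (w : ℝ × H) : ℝ × H :=
  (s * w.1, J ((lam * w.1 - s * ⟪n, w.2⟫_ℝ) • n + (w.2 - ⟪n, w.2⟫_ℝ • n)))

/-- Generalized Lorentz transform `W_{∞,c}[s,n,J]` on `M(H) = ℝ × H` (case `λ = ∞`). -/
noncomputable def Wtach {H : Type*} [NormedAddCommGroup H] [InnerProductSpace ℝ H]
    (c s : ℝ) (n : H) (J : H ≃ₗᵢ[ℝ] H) (w : ℝ × H) : ℝ × H :=
  (-⟪n, w.2⟫_ℝ / c, J ((c * w.1) • n + (w.2 - ⟪n, w.2⟫_ℝ • n)))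

/-! The time component of `W_{λ,c}` at the time axis vector `e₀` is `s γ`, and at `n` it is
`-γ (λ / c²) ‖n‖²`, where `γ` is the Lorentz factor of `λ` and `c`. The first value determines `γ`,
after which the second determines `c`. So distinct `c` give distinct transforms, and since `w + a`
runs through all of `M(H)` as `a` does, a point where they differ can be reached from any `w`. -/

/-- The Lorentz factor `γ = 1 / √|1 - λ² / c²|` of the speed `λ` relative to the light speed `c`.
The absolute value admits speeds above `c`; at `|λ| = |c|` the value is the junk `0`. -/
noncomputable def lorentzFactor (lam c : ℝ) : ℝ :=
  (√|1 - lam ^ 2 / c ^ 2|)⁻¹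

theorem lorentzFactor_pos {lam c : ℝ} (hc : c ≠ 0) (h : |lam| ≠ |c|) :
    0 < lorentzFactor lam c := by
  have hratio : lam ^ 2 / c ^ 2 ≠ 1 := by
    rwa [Ne, div_eq_one_iff_eq (pow_ne_zero 2 hc), sq_eq_sq_iff_abs_eq_abs]
  exact inv_pos.2 (Real.sqrt_pos.2 (abs_pos.2 (sub_ne_zero.2 hratio.symm)))

section

variable {H : Type*} [NormedAddCommGroup H] [InnerProductSpace ℝ H]

theorem Wfin_fst (lam c s : ℝ) (n : H) (J : H ≃ₗᵢ[ℝ] H) (w : ℝ × H) :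
    (Wfin lam c s n J w).1 = (s * w.1 - lam / c ^ 2 * ⟪n, w.2⟫_ℝ) * lorentzFactor lam c :=
  div_eq_mul_inv _ _

theorem lorentzFactor_eq_of_Wfin_eq {lam c₁ c₂ s : ℝ} {n : H} {J : H ≃ₗᵢ[ℝ] H} (hs : s ≠ 0)
    (h : Wfin lam c₁ s n J = Wfin lam c₂ s n J) :
    lorentzFactor lam c₁ = lorentzFactor lam c₂ := by
  have htime : s * lorentzFactor lam c₁ = s * lorentzFactor lam c₂ := by
    simpa [Wfin_fst] using congrArg Prod.fst (congrFun h (1, 0))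
  exact mul_left_cancel₀ hs htime

theorem Wfin_injOn_lightSpeed {lam s : ℝ} {n : H} (J : H ≃ₗᵢ[ℝ] H) (hlam : 0 < lam) (hs : s ≠ 0)
    (hn : n ≠ 0) : Set.InjOn (fun c ↦ Wfin lam c s n J) {c | 0 < c ∧ c ≠ lam} := by
  rintro c₁ ⟨hc₁, hlam₁⟩ c₂ ⟨hc₂, -⟩ h
  have hγ : lorentzFactor lam c₁ ≠ 0 := by
    refine (lorentzFactor_pos hc₁.ne' ?_).ne'
    rw [abs_of_pos hlam, abs_of_pos hc₁]
    exact hlam₁.symm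
  have hspace : lam / c₁ ^ 2 * ⟪n, n⟫_ℝ * lorentzFactor lam c₁ =
      lam / c₂ ^ 2 * ⟪n, n⟫_ℝ * lorentzFactor lam c₁ := by
    simpa only [Wfin_fst, mul_zero, zero_sub, neg_mul, neg_inj,
      ← lorentzFactor_eq_of_Wfin_eq hs h] using congrArg Prod.fst (congrFun h (0, n))
  have hdiv : lam / c₁ ^ 2 = lam / c₂ ^ 2 :=
    mul_right_cancel₀ (inner_self_ne_zero.2 hn) (mul_right_cancel₀ hγ hspace)
  have hsq : c₁ ^ 2 = c₂ ^ 2 := by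
    simpa only [div_eq_mul_inv, mul_right_inj' hlam.ne', inv_inj] using hdiv
  exact (pow_left_inj₀ hc₁.le hc₂.le two_ne_zero).1 hsq

theorem stmt10_general {lam c₁ c₂ s : ℝ} {n : H} (J : H ≃ₗᵢ[ℝ] H) (hlam : 0 < lam)
    (hc₁ : 0 < c₁) (hc₂ : 0 < c₂) (hlam₁ : c₁ ≠ lam) (hlam₂ : c₂ ≠ lam) (hcc : c₁ ≠ c₂)
    (hs : s ≠ 0) (hn : n ≠ 0) (w : ℝ × H) :
    ∃ a : ℝ × H, Wfin lam c₁ s n J (w + a) ≠ Wfin lam c₂ s n J (w + a) := by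
  have hW : Wfin lam c₁ s n J ≠ Wfin lam c₂ s n J :=
    (Wfin_injOn_lightSpeed J hlam hs hn).ne ⟨hc₁, hlam₁⟩ ⟨hc₂, hlam₂⟩ hcc
  obtain ⟨v, hv⟩ := Function.ne_iff.1 hW
  exact ⟨v - w, by rwa [add_sub_cancel]⟩

end

/-- Corollary: for `0 < c₁,c₂ < ∞`, `c₁ ≠ c₂`, any `w ∈ M(H)` and any
`ε ∈ (0, min(c₁,c₂))` there exist `λ ∈ (0,ε)` and `a ∈ M(H)` with
`W_{λ,c₁}[s,n,J;a] w ≠ W_{λ,c₂}[s,n,J;a] w`. -/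
theorem stmt10 {H : Type*} [NormedAddCommGroup H] [InnerProductSpace ℝ H] [CompleteSpace H]
    (c₁ c₂ : ℝ) (hc₁ : 0 < c₁) (hc₂ : 0 < c₂) (hcc : c₁ ≠ c₂)
    (s : ℝ) (hs : s = 1 ∨ s = -1) (J : H ≃ₗᵢ[ℝ] H) (n : H) (hn : ‖n‖ = 1)
    (w : ℝ × H) (ε : ℝ) (hε : 0 < ε) (hε' : ε < min c₁ c₂) :
    ∃ lam : ℝ, 0 < lam ∧ lam < ε ∧ ∃ a : ℝ × H,
      Wfin lam c₁ s n J (w + a) ≠ Wfin lam c₂ s n J (w + a) := by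
  obtain ⟨hε₁, hε₂⟩ := lt_min_iff.1 hε'
  have hlam : ε / 2 < ε := half_lt_self hε
  have hs0 : s ≠ 0 := by rcases hs with rfl | rfl <;> norm_num
  have hn0 : n ≠ 0 := norm_ne_zero_iff.1 (hn ▸ one_ne_zero)
  exact ⟨ε / 2, half_pos hε, hlam, stmt10_general J (half_pos hε) hc₁ hc₂
    (hlam.trans hε₁).ne' (hlam.trans hε₂).ne' hcc hs0 hn0 w⟩
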